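/- Let R be a reduced commutative ring with J(R) ≠ 0. Then R has a maximal subring. -/

import Mathlib

/-- A ring is submaximal if it has a maximal subring. -/
def Submaximal (R : Type*) [CommRing R] : Prop :=
  ∃ S : Subring R, S ≠ ⊤ ∧ ∀ T : Subring R, S < T → T = ⊤

/-!
If `R` is not a Jacobson ring, then some quotient domain of `R` has nonzero Jacobson radical, and
maximal subrings pull back along surjections. So let `R` be a domain with `J(R) ≠ 0`. It is
algebraic over a polynomial ring `A` over `ℤ` or `𝔽_p`, a factorial ring with finitely many units.
Such an `A` has zero Jacobson radical, whereas `J(R) ∩ A` contains some `c ≠ 0`. Hence there is an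
`f ∈ A` such that `cf + 1` is a nonunit of `A`, though it is a unit of `R`; any prime factor `π` of
`cf + 1` becomes invertible in `R`. The elements of `R` that are integral over the localization of
`A` at `(π)` form a proper subring `S` with `R = S[1/π]`, and Zorn's lemma enlarges `S` to a maximal
subring.
-/

theorem Submaximal.of_surjective {R R' : Type*} [CommRing R] [CommRing R'] {f : R →+* R'}
    (hf : Function.Surjective f) (h : Submaximal R') : Submaximal R := by
  obtain ⟨S, hS, hmax⟩ := h
  refine ⟨S.comap f, fun htop ↦ hS ?_, fun T hST ↦ ?_⟩
  · rw [← Subring.map_comap_eq_self_of_surjective hf S, htop, ← RingHom.range_eq_map,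
      RingHom.range_eq_top.2 hf]
  · have hker : f ⁻¹' {0} ⊆ T := fun x hx ↦ hST.le <| by
      simpa only [Subring.mem_comap, show f x = 0 from hx] using S.zero_mem
    have hT : (T.map f).comap f = T := Subring.comap_map_eq_self hker
    have hlt : S < T.map f := by
      refine lt_of_le_of_ne ?_ fun heq ↦ hST.ne (heq ▸ hT)
      rw [← Subring.map_comap_eq_self_of_surjective hf S]
      exact (Subring.gc_map_comap f).monotone_l hST.le
    rw [← hT, hmax _ hlt, Subring.comap_top]

theorem Submaximal.of_finiteType {A R : Type*} [CommRing A] [CommRing R] [Algebra A R]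
    [Algebra.FiniteType A R] (h : ¬ Function.Surjective (algebraMap A R)) : Submaximal R := by
  obtain ⟨s, hs⟩ := Algebra.FiniteType.out (R := A) (A := R)
  have eq_top {T : Subring R} (hAT : (algebraMap A R).range ≤ T) (hsT : (s : Set R) ⊆ T) :
      T = ⊤ := by
    rw [eq_top_iff, ← Algebra.top_toSubring (R := A), ← hs, Algebra.adjoin_eq_ring_closure,
      Subring.closure_le]
    exact Set.union_subset hAT hsT
  have hrange : ¬ (s : Set R) ⊆ (algebraMap A R).range :=
    fun hsA ↦ h (RingHom.range_eq_top.1 (eq_top le_rfl hsA))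
  have chain_bound : ∀ c ⊆ {T : Subring R | ¬ (s : Set R) ⊆ T}, IsChain (· ≤ ·) c → ∀ T ∈ c,
      ∃ ub ∈ {T : Subring R | ¬ (s : Set R) ⊆ T}, ∀ T' ∈ c, T' ≤ ub := by
    intro c hc hchain T hT
    refine ⟨sSup c, fun hsup ↦ ?_, fun _ ↦ le_sSup⟩
    rw [Subring.coe_sSup_of_directedOn ⟨T, hT⟩ hchain.directedOn] at hsup
    obtain ⟨T', hT', hsT'⟩ := DirectedOn.exists_mem_subset_of_finset_subset_biUnion ⟨T, hT⟩
      hchain.directedOn hsup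
    exact hc hT' hsT'
  obtain ⟨M, hAM, hM⟩ := zorn_le_nonempty₀ _ chain_bound _ hrange
  refine ⟨M, fun hMtop ↦ hM.prop (hMtop ▸ Set.subset_univ _), fun T hMT ↦ ?_⟩
  exact eq_top (hAM.trans hMT.le) (not_not.1 (hM.not_prop_of_gt hMT))

theorem mem_of_algebraMap_dvd_of_isIntegral {A B : Type*} [CommRing A] [CommRing B] [Algebra A B]
    [FaithfulSMul A B] [Algebra.IsIntegral A B] {P : Ideal A} [P.IsPrime] {p d : A} (hp : p ∈ P)
    (h : algebraMap A B p ∣ algebraMap A B d) : d ∈ P := by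
  have hker : (⊥ : Ideal B).comap (algebraMap A B) ≤ P := by
    rw [Ideal.comap_bot_of_injective _ (FaithfulSMul.algebraMap_injective A B)]
    exact bot_le
  obtain ⟨Q, -, -, rfl⟩ := Ideal.exists_ideal_over_prime_of_isIntegral P ⊥ hker
  exact Q.mem_of_dvd h hp

/-- The elements `r` of the `A`-algebra `R` such that `d • r` is integral over `A` for some `d`
outside the prime ideal `P`: the preimage in `R` of the integral closure of `A_P` in `R_P`. -/
def integralClosureAtPrime {A : Type*} (R : Type*) [CommRing A] [CommRing R] [Algebra A R]
    (P : Ideal A) [P.IsPrime] : Subalgebra A R :=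
  (integralClosure A R).saturation (Algebra.algebraMapSubmonoid R P.primeCompl) <| by
    rintro _ ⟨d, -, rfl⟩
    exact isIntegral_algebraMap

theorem mem_integralClosureAtPrime {A R : Type*} [CommRing A] [CommRing R] [Algebra A R]
    {P : Ideal A} [P.IsPrime] {r : R} :
    r ∈ integralClosureAtPrime R P ↔ ∃ d ∉ P, IsIntegral A (d • r) := by
  simp [integralClosureAtPrime, Algebra.algebraMapSubmonoid, Algebra.smul_def,
    mem_integralClosure_iff, Ideal.primeCompl]

theorem notMem_integralClosureAtPrime_of_mul_eq_one {A R : Type*} [CommRing A] [CommRing R]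
    [Algebra A R] [FaithfulSMul A R] {P : Ideal A} [P.IsPrime] {p : A} (hp : p ∈ P) {w : R}
    (hw : algebraMap A R p * w = 1) : w ∉ integralClosureAtPrime R P := by
  rw [mem_integralClosureAtPrime]
  rintro ⟨d, hd, hint⟩
  have : FaithfulSMul A (integralClosure A R) := .tower_bot A (integralClosure A R) R
  refine hd (mem_of_algebraMap_dvd_of_isIntegral (B := integralClosure A R) hp
    ⟨⟨d • w, hint⟩, Subtype.ext ?_⟩)
  change algebraMap A R d = algebraMap A R p * d • w
  rw [mul_smul_comm, hw, Algebra.algebraMap_eq_smul_one]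

theorem exists_pow_smul_mem_integralClosureAtPrime {A R : Type*} [CommRing A] [WfDvdMonoid A]
    [CommRing R] [Algebra A R] {P : Ideal A} [P.IsPrime] {π : A} (hπ : Irreducible π)
    (hP : P ≤ Ideal.span {π}) {r : R} (hr : IsAlgebraic A r) :
    ∃ n : ℕ, π ^ n • r ∈ integralClosureAtPrime R P := by
  obtain ⟨c, hc, hint⟩ := hr.exists_integral_multiple
  obtain ⟨n, d, hd, rfl⟩ := WfDvdMonoid.max_power_factor hc hπ
  refine ⟨n, mem_integralClosureAtPrime.2 ⟨d, fun hdP ↦ hd ?_, ?_⟩⟩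
  · exact Ideal.mem_span_singleton.1 (hP hdP)
  · rwa [smul_smul, mul_comm]

theorem Submaximal.of_prime_of_isUnit_algebraMap {A R : Type*} [CommRing A] [IsDomain A]
    [WfDvdMonoid A] [CommRing R] [Algebra A R] [FaithfulSMul A R] [Algebra.IsAlgebraic A R]
    {π : A} (hπ : Prime π) (hu : IsUnit (algebraMap A R π)) : Submaximal R := by
  have : (Ideal.span {π}).IsPrime := (Ideal.span_singleton_prime hπ.ne_zero).2 hπ
  obtain ⟨w, hw⟩ := hu.exists_right_inv
  let S := integralClosureAtPrime R (Ideal.span {π})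
  have hadjoin : Algebra.adjoin S {w} = ⊤ := by
    refine eq_top_iff.2 fun r _ ↦ ?_
    obtain ⟨n, hn⟩ := exists_pow_smul_mem_integralClosureAtPrime hπ.irreducible le_rfl
      (Algebra.IsAlgebraic.isAlgebraic (R := A) r)
    have hr : r = (⟨π ^ n • r, hn⟩ : S) • w ^ n := by
      change r = π ^ n • r * w ^ n
      rw [Algebra.smul_def, map_pow, mul_right_comm, ← mul_pow, hw, one_pow, one_mul]
    rw [hr]
    exact Subalgebra.smul_mem _ (pow_mem (Algebra.self_mem_adjoin_singleton S w) n) _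
  have : Algebra.FiniteType S R := ⟨⟨{w}, by rw [Finset.coe_singleton, hadjoin]⟩⟩
  refine .of_finiteType (A := S) fun hsurj ↦ ?_
  obtain ⟨⟨_, hwS⟩, rfl⟩ := hsurj w
  exact notMem_integralClosureAtPrime_of_mul_eq_one (Ideal.mem_span_singleton_self π) hw hwS

theorem jacobson_bot_eq_bot_of_finite_units (A : Type*) [CommRing A] [IsDomain A] [Finite Aˣ] :
    Ideal.jacobson (⊥ : Ideal A) = ⊥ := by
  by_contra hJ
  obtain ⟨c, hcJ, hc⟩ := Submodule.exists_mem_ne_zero_of_ne_bot hJ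
  have hunit : ∀ f, IsUnit (c * f + 1) := Ideal.mem_jacobson_bot.1 hcJ
  have : Finite A := Finite.of_injective (fun f ↦ (hunit f).unit) fun f g hfg ↦
    mul_left_cancel₀ hc (add_right_cancel (congrArg Units.val hfg))
  exact hJ (IsJacobsonRing.out inferInstance Ideal.isRadical_bot)

theorem finite_units_mvPolynomial (σ B : Type*) [CommRing B] [IsReduced B] [Finite Bˣ] :
    Finite (MvPolynomial σ B)ˣ := by
  refine Finite.of_surjective (Units.map (MvPolynomial.C (R := B) (σ := σ)).toMonoidHom)
    fun u ↦ ?_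
  obtain ⟨r, hr, hu⟩ := MvPolynomial.isUnit_iff_eq_C_of_isReduced.1 u.isUnit
  exact ⟨hr.unit, Units.ext hu.symm⟩

theorem exists_prime_isUnit_algebraMap {A R : Type*} [CommRing A] [IsDomain A]
    [UniqueFactorizationMonoid A] [Finite Aˣ] [CommRing R] [IsDomain R] [Algebra A R]
    [Algebra.IsAlgebraic A R] (hJ : Ideal.jacobson (⊥ : Ideal R) ≠ ⊥) :
    ∃ π : A, Prime π ∧ IsUnit (algebraMap A R π) := by
  obtain ⟨a, haJ, ha⟩ := Submodule.exists_mem_ne_zero_of_ne_bot hJ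
  obtain ⟨c, hcJ, hc⟩ := Submodule.exists_mem_ne_zero_of_ne_bot
    (Ideal.comap_ne_bot_of_algebraic_mem ha haJ (Algebra.IsAlgebraic.isAlgebraic (R := A) a))
  obtain ⟨f, hf⟩ : ∃ f, ¬ IsUnit (c * f + 1) := by
    rwa [← not_forall, ← Ideal.mem_jacobson_bot, jacobson_bot_eq_bot_of_finite_units]
  have hu : IsUnit (algebraMap A R (c * f + 1)) := by
    simpa only [map_add, map_mul, map_one] using
      Ideal.mem_jacobson_bot.1 (Ideal.mem_comap.1 hcJ) (algebraMap A R f)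
  have hne : c * f + 1 ≠ 0 := fun h ↦ hu.ne_zero (by rw [h, map_zero])
  obtain ⟨π, hπ, hdvd⟩ := WfDvdMonoid.exists_irreducible_factor hf hne
  exact ⟨π, hπ.prime, isUnit_of_dvd_unit (map_dvd _ hdvd) hu⟩

theorem Submaximal.of_jacobson_bot_ne_bot_of_faithfulSMul (B : Type*) {R : Type*}
    [CommRing B] [IsDomain B] [UniqueFactorizationMonoid B] [Finite Bˣ] [CommRing R] [IsDomain R]
    [Algebra B R] [FaithfulSMul B R] (hJ : Ideal.jacobson (⊥ : Ideal R) ≠ ⊥) : Submaximal R := by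
  obtain ⟨s, hs⟩ := exists_isTranscendenceBasis B R
  let A := Algebra.adjoin B (Set.range ((↑) : s → R))
  let e : MvPolynomial s B ≃* A := hs.1.aevalEquiv.toMulEquiv
  have : UniqueFactorizationMonoid A := e.uniqueFactorizationMonoid inferInstance
  have := finite_units_mvPolynomial s B
  have : Finite Aˣ := Finite.of_equiv _ (Units.mapEquiv e).toEquiv
  have : Algebra.IsAlgebraic A R := hs.isAlgebraic
  obtain ⟨π, hπ, hu⟩ := exists_prime_isUnit_algebraMap (A := A) hJ
  exact .of_prime_of_isUnit_algebraMap hπ hu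

theorem Submaximal.of_jacobson_bot_ne_bot {R : Type*} [CommRing R] [IsDomain R]
    (hJ : Ideal.jacobson (⊥ : Ideal R) ≠ ⊥) : Submaximal R := by
  obtain ⟨p, hchar⟩ := CharP.exists R
  obtain hp | rfl := CharP.char_is_prime_or_zero R p
  · have : Fact p.Prime := ⟨hp⟩
    let _ : Algebra (ZMod p) R := ZMod.algebra R p
    exact .of_jacobson_bot_ne_bot_of_faithfulSMul (ZMod p) hJ
  · have : CharZero R := CharP.charP_to_charZero R
    exact .of_jacobson_bot_ne_bot_of_faithfulSMul ℤ hJ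

theorem stmt14_general {R : Type*} [CommRing R] (h : ¬ IsJacobsonRing R) : Submaximal R := by
  rw [isJacobsonRing_iff_prime_eq] at h
  push Not at h
  obtain ⟨P, hP, hPJ⟩ := h
  exact .of_surjective Ideal.Quotient.mk_surjective
    (.of_jacobson_bot_ne_bot (mt Ideal.jacobson_eq_iff_jacobson_quotient_eq_bot.2 hPJ))

theorem stmt14 {R : Type*} [CommRing R] [IsReduced R]
    (hJ : Ideal.jacobson (⊥ : Ideal R) ≠ ⊥) :
    Submaximal R := by
  exact stmt14_general fun h ↦ hJ (h.out Ideal.isRadical_bot)
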